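/- arXiv:1911.08196 — 2 statements merged into one kernel-verified Lean document; each statement's English description precedes it below -/
import Mathlib

section
/- In an isolated network defending instance, for every α ≥ 0 and R ≥ 0: the value α is achievable with resource R if and only if there exists a subset S ⊆ B_α such that ∑_{u ∈ A_α∖S} LB_u + ∑_{u ∈ S} UB_u + ∑_{v ∈ (V∖A_α) ∩ N(B_α∖S)} LB_v ≤ R, where N(B_α∖S) = ⋃_{u ∈ B_α∖S} N(u) is the set of all neighbors of nodes in B_α∖S. In particular, the minimum total resource needed to achieve defending result at most α equals the minimum over S ⊆ B_α of this sum. -/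
open scoped Classical

/-- A network defending instance: a finite simple undirected graph together with
nonnegative symmetric edge weights `w`, thresholds `LB ≤ UB`, and values `g' ≤ g`. -/
structure DefInstance (V : Type*) where
  G : SimpleGraph V
  w : V → V → ℝ
  w_nonneg : ∀ u v, 0 ≤ w u v
  w_symm : ∀ u v, w u v = w v u
  LB : V → ℝ
  UB : V → ℝ
  g : V → ℝ
  g' : V → ℝ
  LB_nonneg : ∀ u, 0 ≤ LB u
  LB_le_UB : ∀ u, LB u ≤ UB u
  g'_nonneg : ∀ u, 0 ≤ g' u
  g'_le_g : ∀ u, g' u ≤ g u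

variable {V : Type*} [Fintype V]

/-- The defending power of node `u` under resource allocation `r`:
`p_u = r_u + ∑_{v : (u,v) ∈ E} w_{uv} · r_v`. -/
noncomputable def power (I : DefInstance V) (r : V → ℝ) (u : V) : ℝ :=
  r u + ∑ v ∈ Finset.univ.filter (fun v => I.G.Adj u v), I.w u v * r v

/-- The attacker's gain when attacking node `u`: it is `g_u` if `p_u < LB_u`;
it is `g'_u` if `LB_u ≤ p_u < UB_u` and some neighbor `v` has `p_v < LB_v`;
and `0` otherwise. -/
noncomputable def gain (I : DefInstance V) (r : V → ℝ) (u : V) : ℝ :=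
  if power I r u < I.LB u then I.g u
  else if power I r u < I.UB u ∧ ∃ v, I.G.Adj u v ∧ power I r v < I.LB v then I.g' u
  else 0

/-- The defending result of `r`: the maximum attacker's gain over all nodes. -/
noncomputable def defResult (I : DefInstance V) (r : V → ℝ) : ℝ :=
  ⨆ u, gain I r u

/-- `r` is a defending strategy with total resource `R`. -/
def IsStrategy (r : V → ℝ) (R : ℝ) : Prop :=
  (∀ u, 0 ≤ r u) ∧ ∑ u, r u = R

/-- The value `α` is achievable with resource `R`: some defending strategy with total
resource `R` has defending result at most `α`. -/
def Achievable (I : DefInstance V) (α R : ℝ) : Prop :=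
  ∃ r, IsStrategy r R ∧ defResult I r ≤ α

/-!
The result of a strategy is at most `α` exactly when every vulnerable node has power at least its
lower threshold and every crucial node either reaches its upper threshold or has all its neighbours
at their lower thresholds. Choosing the set `S` of crucial nodes that reach their upper threshold
turns this into a pointwise lower bound on the power. In an isolated instance power and allocation
coincide, so the bound can be met with total resource `R` iff its sum is at most `R`.
-/

theorem exists_ge_sum_eq_iff {ι M : Type*} [Fintype ι] [Nonempty ι] [AddCommGroup M]
    [PartialOrder M] [IsOrderedAddMonoid M] {d : ι → M} {R : M} :
    (∃ r, d ≤ r ∧ ∑ i, r i = R) ↔ ∑ i, d i ≤ R := by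
  constructor
  · rintro ⟨r, hdr, rfl⟩
    exact Finset.sum_le_sum fun i _ => hdr i
  · intro hd
    obtain ⟨a⟩ := ‹Nonempty ι›
    refine ⟨d + Pi.single a (R - ∑ i, d i), ?_, ?_⟩
    · exact le_add_of_nonneg_right (Pi.single_nonneg.2 (sub_nonneg.2 hd))
    · simp only [Pi.add_apply, Finset.sum_add_distrib, Finset.sum_pi_single',
        Finset.mem_univ, if_true, add_sub_cancel]

theorem csInf_upperClosure {M : Type*} [ConditionallyCompleteLattice M] {s : Set M}
    (hs : s.Nonempty) (hbdd : BddBelow s) : sInf (upperClosure s : Set M) = sInf s :=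
  ((isGLB_congr (lowerBounds_upperClosure (s := s))).2 (isGLB_csInf hs hbdd)).csInf_eq
    (hs.mono subset_upperClosure)

theorem power_nonneg (I : DefInstance V) {r : V → ℝ} (hr : 0 ≤ r) : 0 ≤ power I r := fun u =>
  add_nonneg (hr u) (Finset.sum_nonneg fun v _ => mul_nonneg (I.w_nonneg u v) (hr v))

theorem power_eq_self {I : DefInstance V} (hiso : ∀ u v, I.G.Adj u v → I.w u v = 0)
    (r : V → ℝ) : power I r = r := by
  ext u
  refine add_eq_left.2 (Finset.sum_eq_zero fun v hv => ?_)
  rw [hiso u v (Finset.mem_filter.1 hv).2, zero_mul]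

theorem gain_le_iff (I : DefInstance V) (r : V → ℝ) {α : ℝ} (hα : 0 ≤ α) (u : V) :
    gain I r u ≤ α ↔
      (α < I.g u → I.LB u ≤ power I r u) ∧
      (α < I.g' u → I.UB u ≤ power I r u ∨ ∀ v, I.G.Adj u v → I.LB v ≤ power I r v) := by
  have hg : α < I.g' u → α < I.g u := fun h => h.trans_le (I.g'_le_g u)
  unfold gain
  split_ifs <;> grind

theorem defResult_le_iff (I : DefInstance V) (r : V → ℝ) {α : ℝ} (hα : 0 ≤ α) :
    defResult I r ≤ α ↔ ∀ u, gain I r u ≤ α :=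
  ⟨fun h u => (le_ciSup (Set.finite_range (gain I r)).bddAbove u).trans h,
    fun h => Real.iSup_le h hα⟩

namespace DefInstance

/-- The power each node needs for the defending result to be at most `α`, when `S` is the set of
crucial nodes chosen to be defended up to their upper threshold. -/
noncomputable def demand {V : Type*} (I : DefInstance V) (α : ℝ) (S : Finset V) (u : V) : ℝ :=
  if u ∈ S then I.UB u
  else if α < I.g u ∨ ∃ x, α < I.g' x ∧ x ∉ S ∧ I.G.Adj x u then I.LB u
  else 0

/-- The resource that the choice `S` of crucial nodes requires, grouped as in the paper into
`A_α ∖ S`, `S` and `(V ∖ A_α) ∩ N(B_α ∖ S)`. -/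
noncomputable def cost (I : DefInstance V) (α : ℝ) (S : Finset V) : ℝ :=
  ∑ u ∈ Finset.univ.filter (fun u => I.g u > α) \ S, I.LB u
    + ∑ u ∈ S, I.UB u
    + ∑ v ∈ Finset.univ.filter
        (fun v => ¬ I.g v > α ∧ ∃ u, I.g' u > α ∧ u ∉ S ∧ I.G.Adj u v), I.LB v

theorem demand_le_iff {V : Type*} (I : DefInstance V) (α : ℝ) (S : Finset V) (p : V → ℝ) :
    I.demand α S ≤ p ↔
      0 ≤ p ∧ (∀ u ∈ S, I.UB u ≤ p u) ∧ (∀ u, α < I.g u → I.LB u ≤ p u) ∧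
        ∀ u, α < I.g' u → u ∉ S → ∀ v, I.G.Adj u v → I.LB v ≤ p v := by
  constructor
  · intro h
    have hLB : ∀ u, (α < I.g u ∨ ∃ x, α < I.g' x ∧ x ∉ S ∧ I.G.Adj x u) → I.LB u ≤ p u := by
      intro u hu
      refine le_trans ?_ (h u)
      rw [demand, if_pos hu]
      split_ifs
      exacts [I.LB_le_UB u, le_rfl]
    refine ⟨fun u => le_trans ?_ (h u), fun u hu => ?_, fun u hu => hLB u (.inl hu),
      fun u hu huS v huv => hLB v (.inr ⟨u, hu, huS, huv⟩)⟩
    · unfold demand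
      split_ifs
      exacts [(I.LB_nonneg u).trans (I.LB_le_UB u), I.LB_nonneg u, le_rfl]
    · simpa only [demand, if_pos hu] using h u
  · rintro ⟨hp, hS, hA, hB⟩ u
    unfold demand
    split_ifs with hu h
    · exact hS u hu
    · rcases h with hgu | ⟨x, hx, hxS, hxu⟩
      exacts [hA u hgu, hB x hx hxS u hxu]
    · exact hp u

theorem cost_eq_sum_demand (I : DefInstance V) {α : ℝ} {S : Finset V}
    (hS : ∀ u ∈ S, α < I.g u) : I.cost α S = ∑ u, I.demand α S u := by
  have hsdiff : Finset.univ.filter (fun u => I.g u > α) \ S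
      = Finset.univ.filter (fun u => I.g u > α ∧ u ∉ S) := by
    ext u; simp
  rw [cost, hsdiff, ← Fintype.sum_ite_mem S I.UB, Finset.sum_filter, Finset.sum_filter,
    ← Finset.sum_add_distrib, ← Finset.sum_add_distrib]
  refine Finset.sum_congr rfl fun u _ => ?_
  by_cases huS : u ∈ S
  · simp [demand, huS, hS u huS]
  · by_cases hgu : α < I.g u <;> simp [demand, huS, hgu]

theorem defResult_le_iff_exists_demand_le (I : DefInstance V) {r : V → ℝ} (hr : 0 ≤ r)
    {α : ℝ} (hα : 0 ≤ α) :
    defResult I r ≤ α ↔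
      ∃ S : Finset V, (∀ u ∈ S, α < I.g' u) ∧ I.demand α S ≤ power I r := by
  simp only [defResult_le_iff I r hα, gain_le_iff I r hα, demand_le_iff]
  constructor
  · intro h
    refine ⟨Finset.univ.filter fun u => α < I.g' u ∧ I.UB u ≤ power I r u,
      fun u hu => (Finset.mem_filter.1 hu).2.1, power_nonneg I hr,
      fun u hu => (Finset.mem_filter.1 hu).2.2, fun u => (h u).1, fun u hu huS => ?_⟩
    exact ((h u).2 hu).resolve_left fun hUB =>
      huS (Finset.mem_filter.2 ⟨Finset.mem_univ u, hu, hUB⟩)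
  · rintro ⟨S, -, -, hUB, hLB, hnbr⟩ u
    refine ⟨hLB u, fun hu => ?_⟩
    by_cases huS : u ∈ S
    exacts [.inl (hUB u huS), .inr (hnbr u hu huS)]

theorem achievable_iff_exists_cost_le [Nonempty V] {I : DefInstance V}
    (hiso : ∀ u v, I.G.Adj u v → I.w u v = 0) {α : ℝ} (hα : 0 ≤ α) (R : ℝ) :
    Achievable I α R ↔ ∃ S : Finset V, (∀ u ∈ S, α < I.g' u) ∧ I.cost α S ≤ R := by
  have cost_le_iff {S : Finset V} (hS : ∀ u ∈ S, α < I.g' u) :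
      I.cost α S ≤ R ↔ ∃ r, I.demand α S ≤ r ∧ ∑ u, r u = R := by
    rw [I.cost_eq_sum_demand fun u hu => (hS u hu).trans_le (I.g'_le_g u), exists_ge_sum_eq_iff]
  constructor
  · rintro ⟨r, ⟨hr, hsum⟩, hres⟩
    obtain ⟨S, hS, hdem⟩ := (I.defResult_le_iff_exists_demand_le hr hα).1 hres
    rw [power_eq_self hiso] at hdem
    exact ⟨S, hS, (cost_le_iff hS).2 ⟨r, hdem, hsum⟩⟩
  · rintro ⟨S, hS, hcost⟩
    obtain ⟨r, hdem, hsum⟩ := (cost_le_iff hS).1 hcost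
    have hr : 0 ≤ r := ((I.demand_le_iff α S r).1 hdem).1
    refine ⟨r, ⟨hr, hsum⟩, (I.defResult_le_iff_exists_demand_le hr hα).2 ⟨S, hS, ?_⟩⟩
    rwa [power_eq_self hiso]

theorem setOf_achievable_eq_upperClosure [Nonempty V] {I : DefInstance V}
    (hiso : ∀ u v, I.G.Adj u v → I.w u v = 0) {α : ℝ} (hα : 0 ≤ α) :
    {R | Achievable I α R} = upperClosure (I.cost α '' {S | ∀ u ∈ S, α < I.g' u}) := by
  ext R
  simp only [Set.mem_ofPred_eq, achievable_iff_exists_cost_le hiso hα, SetLike.mem_coe,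
    mem_upperClosure, Set.exists_mem_image]

end DefInstance

/-- in an isolated instance, `α ≥ 0` is achievable with resource `R` iff some
`S ⊆ B_α` has `∑_{u∈A_α∖S} LB_u + ∑_{u∈S} UB_u + ∑_{v∈(V∖A_α)∩N(B_α∖S)} LB_v ≤ R`; in
particular the minimum resource needed to achieve `α` is the minimum of this sum over
`S ⊆ B_α`. -/
theorem isolated_achievable_iff {V : Type*} [Fintype V] [Nonempty V]
    (I : DefInstance V) (hiso : ∀ u v, I.G.Adj u v → I.w u v = 0)
    (α R : ℝ) (hα : 0 ≤ α) (hR : 0 ≤ R) :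
    (Achievable I α R ↔
      ∃ S : Finset V, (∀ u ∈ S, I.g' u > α) ∧
        ∑ u ∈ Finset.univ.filter (fun u => I.g u > α) \ S, I.LB u
          + ∑ u ∈ S, I.UB u
          + ∑ v ∈ Finset.univ.filter
              (fun v => ¬ I.g v > α ∧ ∃ u, I.g' u > α ∧ u ∉ S ∧ I.G.Adj u v), I.LB v
          ≤ R) ∧
    sInf {R' : ℝ | Achievable I α R'} =
      sInf ((fun S : Finset V =>
        ∑ u ∈ Finset.univ.filter (fun u => I.g u > α) \ S, I.LB u
          + ∑ u ∈ S, I.UB u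
          + ∑ v ∈ Finset.univ.filter
              (fun v => ¬ I.g v > α ∧ ∃ u, I.g' u > α ∧ u ∉ S ∧ I.G.Adj u v), I.LB v)
        '' {S : Finset V | ∀ u ∈ S, I.g' u > α}) := by
  refine ⟨DefInstance.achievable_iff_exists_cost_le hiso hα R, ?_⟩
  rw [DefInstance.setOf_achievable_eq_upperClosure hiso hα]
  exact csInf_upperClosure (Set.Nonempty.image _ ⟨∅, by simp⟩) (Set.toFinite _).bddBelow
end

section
/- (Canonical transformation) For every defending strategy r on the reduction instance there exists a defending strategy r' with the same total resource such that: the defending result of r' is at most the defending result of r; r'_c = 0 for every connector node c; and for every variable node u, either r'_u = 0 or r'_u ≥ 1. -/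
open scoped Classical

variable {V : Type*} [Fintype V]

/-! ### The reduction instance from a DNF instance

Variables are `x_1, …, x_p` and clauses are `C_1, …, C_q`; a literal is a pair
`(i, b) : Fin p × Bool`, where `(i, true)` is `x_i` and `(i, false)` is `x̄_i`.
The nodes of the reduction instance are: a variable node for each literal, a clause node
for each clause, and a connector node `(C_j, a)` for each literal `a` occurring in `C_j`
(connector nodes `(C_j, a)` with `a ∉ C_j` are present as isolated nodes carrying no
edges, zero value, and they play no role). -/

inductive RNode (p q : ℕ) : Type
  | var : Fin p → Bool → RNode p q
  | clause : Fin q → RNode p q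
  | conn : Fin q → Fin p → Bool → RNode p q
  deriving DecidableEq, Fintype

/-- Base relation generating the edges: `x_i — x̄_i`; and, for each literal `(i,b) ∈ C j`,
connector `(C_j,(i,b))` is joined to variable node `(i,b)` and to clause node `C_j`. -/
def redRel {p q : ℕ} (C : Fin q → Finset (Fin p × Bool)) :
    RNode p q → RNode p q → Prop := fun x y =>
  match x, y with
  | .var i _, .var i' _ => i = i'
  | .conn j i b, .var i' b' => i = i' ∧ b = b' ∧ (i, b) ∈ C j
  | .conn j i b, .clause j' => j = j' ∧ (i, b) ∈ C j
  | _, _ => False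

/-- Edge weights: `1` on edges incident to a variable node, `0` on edges incident to a
clause node. -/
noncomputable def redW {p q : ℕ} : RNode p q → RNode p q → ℝ := fun x y =>
  match x, y with
  | .clause _, _ => 0
  | _, .clause _ => 0
  | _, _ => 1

/-- Values: `g = g' = 1` on variable and clause nodes, `0` on connectors. -/
noncomputable def redg {p q : ℕ} : RNode p q → ℝ
  | .conn _ _ _ => 0
  | _ => 1

/-- Lower thresholds: `1` on variable nodes and connectors, `0` on clause nodes. -/
noncomputable def redLB {p q : ℕ} : RNode p q → ℝ
  | .clause _ => 0
  | _ => 1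

/-- Upper thresholds: `1` on variable nodes and connectors, `1/q` on clause nodes. -/
noncomputable def redUB {p q : ℕ} : RNode p q → ℝ
  | .clause _ => 1 / (q : ℝ)
  | _ => 1

/-- The reduction instance associated to a DNF instance. -/
noncomputable def redInstance (p q : ℕ) (C : Fin q → Finset (Fin p × Bool)) :
    DefInstance (RNode p q) where
  G := SimpleGraph.fromRel (redRel C)
  w := redW
  w_nonneg := by intro u v; cases u <;> cases v <;> norm_num [redW]
  w_symm := by intro u v; cases u <;> cases v <;> rfl
  LB := redLB
  UB := redUB
  g := redg
  g' := redg
  LB_nonneg := by intro u; cases u <;> norm_num [redLB]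
  LB_le_UB := by intro u; cases u <;> norm_num [redLB, redUB]
  g'_nonneg := by intro u; cases u <;> norm_num [redg]
  g'_le_g := fun _ => le_rfl

/-- An assignment `σ` satisfies a clause `Cl` if every literal of `Cl` is true under `σ`. -/
def Satisfies {p : ℕ} (σ : Fin p → Bool) (Cl : Finset (Fin p × Bool)) : Prop :=
  ∀ l ∈ Cl, σ l.1 = l.2

/-!
Collect at each literal the resource of its variable node and of its connectors. A defended
connector forces the resource of its literal to be at least `1`, and a defended variable node forces
the resources of its two literals to sum to at least `1`. Hence no node of positive value loses its
protection if the resource of every literal holding at least `1` is concentrated on its variable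
node, or, when neither literal of a variable holds `1` but together they do, all of it is put on one
of the two. What is left over goes to an arbitrary clause node, which can only help there.
-/

section General

variable {I : DefInstance V} {r r' : V → ℝ}

lemma gain_nonneg (I : DefInstance V) (r : V → ℝ) (u : V) : 0 ≤ gain I r u := by
  unfold gain
  split_ifs
  exacts [(I.g'_nonneg u).trans (I.g'_le_g u), I.g'_nonneg u, le_rfl]

lemma gain_le_gain {u : V}
    (hLB : I.LB u ≤ power I r u → I.LB u ≤ power I r' u)
    (hUB : I.UB u ≤ power I r u → I.UB u ≤ power I r' u)
    (hadj : ∀ v, I.G.Adj u v → I.LB v ≤ power I r v → I.LB v ≤ power I r' v) :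
    gain I r' u ≤ gain I r u := by
  by_cases hunder' : power I r' u < I.LB u
  · have hunder : power I r u < I.LB u := lt_of_not_ge fun h => hunder'.not_ge (hLB h)
    simp only [gain, if_pos hunder', if_pos hunder, le_refl]
  by_cases hexposed' : power I r' u < I.UB u ∧ ∃ v, I.G.Adj u v ∧ power I r' v < I.LB v
  · have hexposed : power I r u < I.UB u ∧ ∃ v, I.G.Adj u v ∧ power I r v < I.LB v := by
      obtain ⟨hu, v, huv, hv⟩ := hexposed'
      exact ⟨lt_of_not_ge fun h => hu.not_ge (hUB h), v, huv,
        lt_of_not_ge fun h => hv.not_ge (hadj v huv h)⟩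
    simp only [gain, if_neg hunder', if_pos hexposed', if_pos hexposed]
    split_ifs
    exacts [I.g'_le_g u, le_rfl]
  · simpa only [gain, if_neg hunder', if_neg hexposed'] using gain_nonneg I r u

lemma defResult_le_defResult (h : ∀ u, gain I r' u ≤ gain I r u) :
    defResult I r' ≤ defResult I r :=
  ciSup_mono (Set.finite_range _).bddAbove h

end General

lemma exists_eq_zero_or_le_of_nonneg {ι M : Type*} [Fintype ι] [AddCommMonoid M] [PartialOrder M]
    [IsOrderedAddMonoid M] {a : ι → M} (ha : ∀ i, 0 ≤ a i) (t : M) :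
    ∃ x : ι → M, (∀ i, x i = 0 ∨ t ≤ x i) ∧ (∀ i, t ≤ a i → t ≤ x i) ∧
      (t ≤ ∑ i, a i → t ≤ ∑ i, x i) ∧ ∑ i, x i ≤ ∑ i, a i := by
  by_cases hlarge : ∃ i, t ≤ a i
  · obtain ⟨i, hi⟩ := hlarge
    let x : ι → M := fun k => if t ≤ a k then a k else 0
    have hx_nonneg (k : ι) : 0 ≤ x k := by
      simp only [x]
      split_ifs
      exacts [ha k, le_rfl]
    have hx_of_le {k : ι} (hk : t ≤ a k) : t ≤ x k := hk.trans_eq (if_pos hk).symm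
    refine ⟨x, fun k => ?_, fun k => hx_of_le, fun _ => ?_, Finset.sum_le_sum fun k _ => ?_⟩
    · exact (em (t ≤ a k)).symm.imp (fun hk => if_neg hk) hx_of_le
    · exact (hx_of_le hi).trans
        (Finset.single_le_sum (fun k _ => hx_nonneg k) (Finset.mem_univ i))
    · simp only [x]
      split_ifs
      exacts [le_rfl, ha k]
  have hsmall (i : ι) (hi : t ≤ a i) : False := hlarge ⟨i, hi⟩
  by_cases hsum : t ≤ ∑ i, a i
  · rcases isEmpty_or_nonempty ι with _ | ⟨⟨k⟩⟩
    · exact ⟨a, isEmptyElim, isEmptyElim, id, le_rfl⟩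
    · refine ⟨Pi.single k (∑ i, a i), fun i => ?_, fun i hi => (hsmall i hi).elim, ?_, ?_⟩
      · rcases eq_or_ne i k with rfl | hik
        · exact .inr (by rwa [Pi.single_eq_same])
        · exact .inl (Pi.single_eq_of_ne hik _)
      · simp only [Fintype.sum_pi_single', imp_self]
      · simp only [Fintype.sum_pi_single', le_refl]
  · exact ⟨0, fun _ => .inl rfl, fun i hi => (hsmall i hi).elim, fun h => (hsum h).elim,
      Finset.sum_le_sum fun i _ => ha i⟩

section Reduction

variable {p q : ℕ}

/-- The nodes of the reduction instance as the disjoint union of literals, clauses and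
clause-literal pairs, used to split sums over all nodes. -/
def RNode.equivSum (p q : ℕ) :
    RNode p q ≃ (Fin p × Bool) ⊕ Fin q ⊕ (Fin q × Fin p × Bool) where
  toFun
    | .var i b => .inl (i, b)
    | .clause j => .inr (.inl j)
    | .conn j i b => .inr (.inr (j, i, b))
  invFun
    | .inl (i, b) => .var i b
    | .inr (.inl j) => .clause j
    | .inr (.inr (j, i, b)) => .conn j i b
  left_inv x := by cases x <;> rfl
  right_inv x := by rcases x with _ | _ | _ <;> rfl

lemma RNode.sum_eq {M : Type*} [AddCommMonoid M] (f : RNode p q → M) :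
    ∑ x, f x = ∑ i, ∑ b, f (.var i b) +
      (∑ j, f (.clause j) + ∑ j, ∑ i, ∑ b, f (.conn j i b)) := by
  simp only [← (RNode.equivSum p q).symm.sum_comp f, Fintype.sum_sum_type, Fintype.sum_prod_type]
  rfl

/-- The total resource which `r` places on the variable node of the literal `(i, b)` and on all
its connectors, including the isolated connectors of clauses in which the literal does not
occur. -/
noncomputable def literalResource (r : RNode p q → ℝ) (i : Fin p) (b : Bool) : ℝ :=
  r (.var i b) + ∑ j, r (.conn j i b)

lemma sum_eq_sum_literalResource (r : RNode p q → ℝ) :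
    ∑ x, r x = ∑ i, ∑ b, literalResource r i b + ∑ j, r (.clause j) := by
  have hconn : ∑ j, ∑ i, ∑ b, r (.conn j i b) = ∑ i, ∑ b, ∑ j, r (.conn j i b) := by
    rw [Finset.sum_comm]
    exact Finset.sum_congr rfl fun i _ => Finset.sum_comm
  simp only [RNode.sum_eq, literalResource, Finset.sum_add_distrib, hconn]
  ring

lemma literalResource_nonneg {r : RNode p q → ℝ} (hr : ∀ x, 0 ≤ r x) (i : Fin p) (b : Bool) :
    0 ≤ literalResource r i b :=
  add_nonneg (hr _) (Finset.sum_nonneg fun _ _ => hr _)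

variable {C : Fin q → Finset (Fin p × Bool)} {r r' : RNode p q → ℝ}

lemma redInstance_adj_var_var {i i' : Fin p} {b b' : Bool} :
    (redInstance p q C).G.Adj (.var i b) (.var i' b') ↔ i = i' ∧ b ≠ b' := by
  simp only [redInstance, SimpleGraph.fromRel_adj, redRel]
  grind

lemma redInstance_adj_conn_var {j : Fin q} {i i' : Fin p} {b b' : Bool} :
    (redInstance p q C).G.Adj (.conn j i b) (.var i' b') ↔ i = i' ∧ b = b' ∧ (i, b) ∈ C j := by
  simp [redInstance, redRel]

lemma redInstance_adj_conn_clause {j j' : Fin q} {i : Fin p} {b : Bool} :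
    (redInstance p q C).G.Adj (.conn j i b) (.clause j') ↔ j = j' ∧ (i, b) ∈ C j := by
  simp [redInstance, redRel]

lemma not_redInstance_adj_conn_conn {j j' : Fin q} {i i' : Fin p} {b b' : Bool} :
    ¬(redInstance p q C).G.Adj (.conn j i b) (.conn j' i' b') := by
  simp [redInstance, redRel]

lemma mem_of_redInstance_adj_conn {x : RNode p q} {j : Fin q} {i : Fin p} {b : Bool}
    (h : (redInstance p q C).G.Adj x (.conn j i b)) : (i, b) ∈ C j := by
  rw [SimpleGraph.adj_comm] at h
  cases x with
  | var => exact (redInstance_adj_conn_var.mp h).2.2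
  | clause => exact (redInstance_adj_conn_clause.mp h).2
  | conn => exact (not_redInstance_adj_conn_conn h).elim

lemma power_redInstance_var (C : Fin q → Finset (Fin p × Bool)) (r : RNode p q → ℝ) (i : Fin p)
    (b : Bool) :
    power (redInstance p q C) r (.var i b) =
      ∑ b', r (.var i b') + ∑ j with (i, b) ∈ C j, r (.conn j i b) := by
  have hw : (redInstance p q C).w = redW := rfl
  simp only [power, Finset.sum_filter, RNode.sum_eq, redInstance_adj_var_var,
    SimpleGraph.adj_comm _ (RNode.var i b) (.conn _ _ _), redInstance_adj_conn_var, hw]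
  cases b <;> simp [redW, ite_and, add_left_comm, add_assoc]

lemma power_redInstance_clause (C : Fin q → Finset (Fin p × Bool)) (r : RNode p q → ℝ)
    (j : Fin q) : power (redInstance p q C) r (.clause j) = r (.clause j) := by
  simp [power, redInstance, redW]

lemma power_redInstance_conn {i : Fin p} {b : Bool} {j : Fin q} (hmem : (i, b) ∈ C j)
    (r : RNode p q → ℝ) :
    power (redInstance p q C) r (.conn j i b) = r (.var i b) + r (.conn j i b) := by
  have hw : (redInstance p q C).w = redW := rfl
  simp only [power, Finset.sum_filter, RNode.sum_eq, redInstance_adj_conn_var,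
    not_redInstance_adj_conn_conn, hw]
  cases b <;> simp [redW, ite_and, hmem, add_comm]

lemma power_redInstance_var_le (hr : ∀ x, 0 ≤ r x) (i : Fin p) (b : Bool) :
    power (redInstance p q C) r (.var i b) ≤ ∑ b', literalResource r i b' := by
  have hconn_nonneg (b' : Bool) : 0 ≤ ∑ j, r (.conn j i b') := Finset.sum_nonneg fun _ _ => hr _
  calc power (redInstance p q C) r (.var i b)
      = ∑ b', r (.var i b') + ∑ j with (i, b) ∈ C j, r (.conn j i b) :=
        power_redInstance_var C r i b
    _ ≤ ∑ b', r (.var i b') + ∑ j, r (.conn j i b) := by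
        gcongr
        · exact fun _ _ _ => hr _
        · exact Finset.filter_subset _ _
    _ ≤ ∑ b', r (.var i b') + ∑ b', ∑ j, r (.conn j i b') := by
        gcongr
        exact Finset.single_le_sum (fun b' _ => hconn_nonneg b') (Finset.mem_univ b)
    _ = ∑ b', literalResource r i b' := Finset.sum_add_distrib.symm

lemma sum_var_le_power_redInstance_var (hr : ∀ x, 0 ≤ r x) (i : Fin p) (b : Bool) :
    ∑ b', r (.var i b') ≤ power (redInstance p q C) r (.var i b) := by
  rw [power_redInstance_var]
  exact le_add_of_nonneg_right (Finset.sum_nonneg fun _ _ => hr _)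

lemma power_redInstance_conn_le {i : Fin p} {b : Bool} {j : Fin q} (hmem : (i, b) ∈ C j)
    (hr : ∀ x, 0 ≤ r x) :
    power (redInstance p q C) r (.conn j i b) ≤ literalResource r i b := by
  rw [power_redInstance_conn hmem, literalResource]
  gcongr
  exact Finset.single_le_sum (fun j _ => hr (.conn j i b)) (Finset.mem_univ j)

lemma gain_redInstance_conn (C : Fin q → Finset (Fin p × Bool)) (r : RNode p q → ℝ) (j : Fin q)
    (i : Fin p) (b : Bool) : gain (redInstance p q C) r (.conn j i b) = 0 := by
  simp [gain, redInstance, redg]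

lemma defResult_redInstance_le_defResult (hr : ∀ x, 0 ≤ r x) (hr' : ∀ x, 0 ≤ r' x)
    (hlit : ∀ i b, 1 ≤ literalResource r i b → 1 ≤ r' (.var i b))
    (hpair : ∀ i, 1 ≤ ∑ b, literalResource r i b → 1 ≤ ∑ b, r' (.var i b))
    (hclause : ∀ j, r (.clause j) ≤ r' (.clause j)) :
    defResult (redInstance p q C) r' ≤ defResult (redInstance p q C) r := by
  have hvar (i : Fin p) (b : Bool) (h : 1 ≤ power (redInstance p q C) r (.var i b)) :
      1 ≤ power (redInstance p q C) r' (.var i b) :=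
    (hpair i (h.trans (power_redInstance_var_le hr i b))).trans
      (sum_var_le_power_redInstance_var hr' i b)
  have hclause_power (j : Fin q) :
      power (redInstance p q C) r (.clause j) ≤ power (redInstance p q C) r' (.clause j) := by
    simpa only [power_redInstance_clause] using hclause j
  have hconn {j : Fin q} {i : Fin p} {b : Bool} (hmem : (i, b) ∈ C j)
      (h : 1 ≤ power (redInstance p q C) r (.conn j i b)) :
      1 ≤ power (redInstance p q C) r' (.conn j i b) := by
    rw [power_redInstance_conn hmem]
    exact le_add_of_le_of_nonneg (hlit i b (h.trans (power_redInstance_conn_le hmem hr))) (hr' _)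
  have hneighbor (u v : RNode p q) (huv : (redInstance p q C).G.Adj u v)
      (h : (redInstance p q C).LB v ≤ power (redInstance p q C) r v) :
      (redInstance p q C).LB v ≤ power (redInstance p q C) r' v := by
    cases v with
    | var i b => exact hvar i b h
    | clause j => exact h.trans (hclause_power j)
    | conn j i b => exact hconn (mem_of_redInstance_adj_conn huv) h
  refine defResult_le_defResult fun u => ?_
  cases u with
  | var i b => exact gain_le_gain (hvar i b) (hvar i b) (hneighbor _)
  | clause j =>
    exact gain_le_gain (fun h => h.trans (hclause_power j)) (fun h => h.trans (hclause_power j))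
      (hneighbor _)
  | conn j i b => simp only [gain_redInstance_conn, le_refl]

/-- The allocation with resource `x i b` on the variable node of the literal `(i, b)`, `c j` on the
clause node `j`, and nothing on the connectors. -/
def connectorFree (x : Fin p → Bool → ℝ) (c : Fin q → ℝ) : RNode p q → ℝ
  | .var i b => x i b
  | .clause j => c j
  | .conn _ _ _ => 0

lemma sum_connectorFree (x : Fin p → Bool → ℝ) (c : Fin q → ℝ) :
    ∑ u, connectorFree x c u = ∑ i, ∑ b, x i b + ∑ j, c j := by
  simp [RNode.sum_eq, connectorFree]

end Reduction

/-- canonical transformation: every defending strategy `r` on the reduction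
instance can be transformed into a strategy `r'` with the same total resource, defending
result no larger, `r'_c = 0` on every connector node, and `r'_u = 0` or `r'_u ≥ 1` on
every variable node. -/
theorem canonical_transformation (p q : ℕ) (hq : 1 ≤ q)
    (C : Fin q → Finset (Fin p × Bool)) (r : RNode p q → ℝ) (hr : ∀ x, 0 ≤ r x) :
    ∃ r' : RNode p q → ℝ, (∀ x, 0 ≤ r' x) ∧ (∑ x, r' x = ∑ x, r x) ∧
      defResult (redInstance p q C) r' ≤ defResult (redInstance p q C) r ∧
      (∀ j i b, r' (.conn j i b) = 0) ∧
      (∀ i b, r' (.var i b) = 0 ∨ 1 ≤ r' (.var i b)) := by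
  choose x hx hlit hpair hle using fun i =>
    exists_eq_zero_or_le_of_nonneg (literalResource_nonneg hr i) 1
  let surplus : ℝ := ∑ i, ∑ b, literalResource r i b - ∑ i, ∑ b, x i b
  let c : Fin q → ℝ := (fun j => r (.clause j)) + Pi.single ⟨0, hq⟩ surplus
  have hsurplus : 0 ≤ surplus := sub_nonneg.mpr (Finset.sum_le_sum fun i _ => hle i)
  have hclause : (fun j => r (.clause j)) ≤ c :=
    le_add_of_nonneg_right (Pi.single_nonneg.mpr hsurplus)
  have hnonneg : ∀ u, 0 ≤ connectorFree x c u
    | .var i b => (hx i b).elim Eq.ge zero_le_one.trans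
    | .clause j => (hr _).trans (hclause j)
    | .conn _ _ _ => le_rfl
  refine ⟨connectorFree x c, hnonneg, ?_,
    defResult_redInstance_le_defResult hr hnonneg hlit hpair hclause, fun _ _ _ => rfl, hx⟩
  rw [sum_connectorFree, sum_eq_sum_literalResource]
  simp only [c, surplus, Pi.add_apply, Finset.sum_add_distrib, Fintype.sum_pi_single']
  ring
end
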